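/- arXiv:1406.3948 — 2 statements merged into one kernel-verified Lean document; each statement's English description precedes it below -/
import Mathlib

section
/- Under exactly the hypotheses of the adjoint error representation theorem (Theorem 1 of the paper: piecewise smooth exact solution w_L, w_R of the balance law with Rankine–Hugoniot condition at α, Lipschitz adjoint solution z of the adjoint equation, and a family of approximations v_{L,ν}, v_{R,ν} with shock at β_ν sufficiently close to w to order ν and matching w at the domain boundary), assume additionally that z fulfills the interior boundary condition ⟪z(α), (f∘w_R)'(α) − (f∘w_L)'(α)⟫ = −( p(w_R(α)) − p(w_L(α)) ). Then the usual adjoint error representation holds: J(v_ν) − J(w) = ∫₀^{β_ν} ⟪z(x), r_{L,ν}(x)⟫ dx + ∫_{β_ν}^1 ⟪z(x), r_{R,ν}(x)⟫ dx + o(ν) as ν → 0⁺, where r_{L,ν} := (f∘v_{L,ν})' + S(v_{L,ν}), r_{R,ν} := (f∘v_{R,ν})' + S(v_{R,ν}), J(v_ν) := ∫₀^{β_ν} p(v_{L,ν}) + ∫_{β_ν}^1 p(v_{R,ν}) − ⟪z(α), f(v_{R,ν}(β_ν)) − f(v_{L,ν}(β_ν))⟫, and J(w) := ∫₀^α p(w_L)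 + ∫_α^1 p(w_R). -/
open Set Filter Asymptotics intervalIntegral
open scoped Topology RealInnerProductSpace

/-!
Away from the shock, pairing the residual with `z` and integrating by parts turns the error of the
functional into an integral in which, by the adjoint equation, all terms linear in `v - w` cancel;
the Taylor remainders left over are `O(ν²)`. Between the shock positions `α` and `β`, where `vL` has
to be compared with `wR`, the constant `z α` is used as test function instead of `z`. By the balance
law the interior boundary condition reads `⟪z α, [S(w)]⟫ = [p(w)]`, so the integrand there vanishes
to leading order: it is `O(ν)` on an interval of length `O(ν)`. The boundary terms at `α` cancel by
the Rankine–Hugoniot condition, and those at `β` up to `⟪z β - z α, f (vR β) - f (wR β)⟫ = O(ν²)`.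
-/

section Asymptotics

variable {X E F : Type*} [NormedAddCommGroup E] [NormedAddCommGroup F]

lemma isBigO_nhdsSet_of_isCompact [TopologicalSpace X] {K : Set X} (hK : IsCompact K)
    {g : X → E} {h : X → F} (hgh : ∀ x ∈ K, g =O[𝓝 x] h) : g =O[𝓝ˢ K] h := by
  refine hK.induction_on (p := fun s => g =O[𝓝ˢ s] h) ?_ ?_ ?_ fun x hx => ?_
  · simp only [nhdsSet_empty, isBigO_bot]
  · exact fun s t hst ht => ht.mono (nhdsSet_mono hst)
  · exact fun s t hs ht => by simpa only [nhdsSet_union] using hs.sup ht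
  · obtain ⟨c, hc⟩ := (hgh x hx).bound
    obtain ⟨U, hU, hUo, hxU⟩ := eventually_nhds_iff.1 hc
    refine ⟨U, mem_nhdsWithin_of_mem_nhds (hUo.mem_nhds hxU), ?_⟩
    rw [hUo.nhdsSet_eq]
    exact isBigO_principal.2 ⟨c, hU⟩

lemma isBigO_inner_mul [InnerProductSpace ℝ E] {l : Filter X} {u v : X → E} {φ ψ : X → ℝ}
    (hu : u =O[l] φ) (hv : v =O[l] ψ) : (fun x => ⟪u x, v x⟫) =O[l] fun x => φ x * ψ x :=
  (IsBigO.of_norm_le fun x => norm_inner_le_norm (u x) (v x)).trans (hu.norm_left.mul hv.norm_left)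

lemma isBigO_of_norm_le_mul {l : Filter X} {u : X → E} {g : X → ℝ}
    (h : ∃ C, ∀ᶠ x in l, ‖u x‖ ≤ C * g x) : u =O[l] g := by
  obtain ⟨C, hC⟩ := h
  exact .of_bound |C| (hC.mono fun x hx => hx.trans ((le_abs_self _).trans_eq (abs_mul _ _)))

lemma isBigO_sub_of_differentiableAt [NormedSpace ℝ E] [NormedSpace ℝ F] {g : E → F} {y : E}
    (hg : DifferentiableAt ℝ g y) {l : Filter X} {u : X → E} {ε : X → ℝ}
    (hu : (fun x => u x - y) =O[l] ε) (hε : Tendsto ε l (𝓝 0)) :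
    (fun x => g (u x) - g y) =O[l] ε :=
  (hg.isBigO_sub.comp_tendsto (tendsto_sub_nhds_zero_iff.1 (hu.trans_tendsto hε))).trans hu

lemma isBigO_sub_of_lipschitzOnWith {L : NNReal} {u : E → F} {s : Set E}
    (hu : LipschitzOnWith L u s) {l : Filter X} {x : X → E} {y : E} {ε : X → ℝ} (hy : y ∈ s)
    (hx : ∀ᶠ q in l, x q ∈ s) (hxy : (fun q => x q - y) =O[l] ε) :
    (fun q => u (x q) - u y) =O[l] ε :=
  (IsBigO.of_bound L (hx.mono fun _ hq => hu.norm_sub_le hq hy)).trans hxy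

lemma tendsto_nhdsSet_diagonal {K : Set E} (hK : IsCompact K) {l : Filter X} {u v : X → E}
    (hu : ∀ᶠ x in l, u x ∈ K) (huv : Tendsto (fun x => v x - u x) l (𝓝 0)) :
    Tendsto (fun x => (u x, v x)) l (𝓝ˢ ((fun y => (y, y)) '' K)) := by
  have hdiag : IsCompact ((fun y => (y, y)) '' K) := hK.image (by fun_prop)
  refine (Metric.hasBasis_nhdsSet_thickening hdiag).tendsto_right_iff.2 fun δ hδ => ?_
  filter_upwards [hu, Metric.tendsto_nhds.1 huv δ hδ] with x hx hdist
  refine Metric.mem_thickening_iff.2 ⟨_, mem_image_of_mem _ hx, ?_⟩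
  simpa only [Prod.dist_eq, dist_self, dist_zero_right, ← dist_eq_norm,
    max_eq_right dist_nonneg] using hdist

end Asymptotics

section Taylor

variable {X E F : Type*} [NormedAddCommGroup E] [NormedSpace ℝ E]
  [NormedAddCommGroup F] [NormedSpace ℝ F]

/-- The remainder of the first-order Taylor expansion of `g` about `w`, evaluated at `v`. -/
noncomputable def taylorRemainder (g : E → F) (w v : E) : F :=
  g v - g w - fderiv ℝ g w (v - w)

lemma taylorRemainder_isBigO_nhds {g : E → F} (hg : ContDiff ℝ 2 g) (y : E) :
    (fun q : E × E => taylorRemainder g q.1 q.2) =O[𝓝 (y, y)] fun q => ‖q.2 - q.1‖ ^ 2 := by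
  obtain ⟨L, t, ht, hL⟩ :=
    (hg.fderiv_right (m := 1) (by norm_num)).contDiffAt.exists_lipschitzOnWith (x := y)
  obtain ⟨r, hr, hrt⟩ := Metric.mem_nhds_iff.1 ht
  have hball := Metric.ball_mem_nhds y hr
  refine IsBigO.of_bound L ?_
  filter_upwards [prod_mem_nhds hball hball] with ⟨w, v⟩ ⟨hw, hv⟩
  have hseg : segment ℝ w v ⊆ t := ((convex_ball y r).segment_subset hw hv).trans hrt
  have hderiv : ∀ x ∈ segment ℝ w v, ‖fderiv ℝ g x - fderiv ℝ g w‖ ≤ L * ‖v - w‖ := fun x hx =>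
    (hL.norm_sub_le (hseg hx) (hrt hw)).trans <| by gcongr; exact norm_sub_le_of_mem_segment hx
  have htaylor := (convex_segment (𝕜 := ℝ) w v).norm_image_sub_le_of_norm_fderiv_le' (𝕜 := ℝ)
    (fun x _ => hg.differentiable two_ne_zero x) hderiv
    (left_mem_segment ℝ w v) (right_mem_segment ℝ w v)
  rwa [norm_pow, norm_norm, pow_two, ← mul_assoc]

lemma taylorRemainder_isBigO_of_isCompact {g : E → F} (hg : ContDiff ℝ 2 g) {K : Set E}
    (hK : IsCompact K) {l : Filter X} {w v : X → E} {ε : X → ℝ} (hw : ∀ᶠ x in l, w x ∈ K)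
    (hvw : (fun x => v x - w x) =O[l] ε) (hε : Tendsto ε l (𝓝 0)) :
    (fun x => taylorRemainder g (w x) (v x)) =O[l] fun x => ε x ^ 2 := by
  have hdiag := isBigO_nhdsSet_of_isCompact (hK.image (f := fun y => (y, y)) (by fun_prop))
    (forall_mem_image.2 fun y _ => taylorRemainder_isBigO_nhds hg y)
  exact (hdiag.comp_tendsto (tendsto_nhdsSet_diagonal hK hw (hvw.trans_tendsto hε))).trans
    (hvw.norm_left.pow 2)

end Taylor

section UniformOn

variable {ι X F : Type*} [NormedAddCommGroup F] {l : Filter ι} {s t : ι → Set X}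

/-- The filter of pairs `(ν, x)` with `ν` tending along `l` and `x ∈ s ν`: being `O(g ν)` along it
means being `O(g ν)` along `l`, uniformly in `x ∈ s ν`. -/
def uniformOn (l : Filter ι) (s : ι → Set X) : Filter (ι × X) :=
  comap Prod.fst l ⊓ 𝓟 {q | q.2 ∈ s q.1}

lemma eventually_uniformOn {P : ι × X → Prop} :
    (∀ᶠ q in uniformOn l s, P q) ↔ ∀ᶠ ν in l, ∀ x ∈ s ν, P (ν, x) := by
  simp only [uniformOn, eventually_inf_principal, eventually_comap, Prod.forall, mem_ofPred_eq]
  exact eventually_congr (.of_forall fun ν =>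
    ⟨fun h x hx => h ν x rfl hx, fun h ν' x hν' hx => by subst hν'; exact h x hx⟩)

lemma tendsto_fst_uniformOn : Tendsto Prod.fst (uniformOn l s) l :=
  tendsto_comap.mono_left inf_le_left

lemma tendsto_mk_uniformOn {u : ι → X} (hu : ∀ᶠ ν in l, u ν ∈ s ν) :
    Tendsto (fun ν => (ν, u ν)) l (uniformOn l s) := fun _ hP =>
  (eventually_uniformOn.1 hP).mp (hu.mono fun _ hν h => h _ hν)

lemma uniformOn_mono (h : ∀ᶠ ν in l, s ν ⊆ t ν) : uniformOn l s ≤ uniformOn l t := fun _ hP =>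
  eventually_uniformOn.2 <|
    (eventually_uniformOn.1 hP).mp (h.mono fun _ hst ht x hx => ht x (hst hx))

lemma isBigO_uniformOn_iff {u : ι × X → F} {g : ι → ℝ} :
    (u =O[uniformOn l s] fun q => g q.1) ↔ ∃ C, ∀ᶠ ν in l, ∀ x ∈ s ν, ‖u (ν, x)‖ ≤ C * ‖g ν‖ := by
  simp only [isBigO_iff, eventually_uniformOn]

lemma isBigO_uniformOn_of_norm_le_mul {u : ι × X → F} {g : ι → ℝ}
    (h : ∃ C, ∀ᶠ ν in l, ∀ x ∈ s ν, ‖u (ν, x)‖ ≤ C * g ν) :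
    u =O[uniformOn l s] fun q => g q.1 :=
  isBigO_of_norm_le_mul (h.imp fun _ hC => eventually_uniformOn.2 hC)

lemma snd_sub_isBigO_uniformOn_Ioo {a : ℝ} {d ε : ι → ℝ} (hd : (fun ν => d ν - a) =O[l] ε) :
    (fun q : ι × ℝ => q.2 - a) =O[uniformOn l fun ν => Ioo a (d ν)] fun q => ε q.1 := by
  obtain ⟨C, hC⟩ := hd.bound
  refine isBigO_uniformOn_iff.2 ⟨C, hC.mono fun ν hν x hx => le_trans ?_ hν⟩
  exact abs_le_abs_of_nonneg (sub_nonneg.2 hx.1.le) (sub_le_sub_right hx.2.le a)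

end UniformOn

section ResidualDefs

variable {E : Type*} [NormedAddCommGroup E] [InnerProductSpace ℝ E]

/-- The pointwise residual of `v` in the balance law `(f ∘ v)' + S ∘ v = 0`. -/
noncomputable def balanceResidual (f S : E → E) (v : ℝ → E) (x : ℝ) : E :=
  deriv (f ∘ v) x + S (v x)

/-- The defect on `[a, b]` of the error representation of `v` relative to `w`: the error of `∫ p`
minus the residual weighted by `z`, completed by the boundary terms of an integration by parts
against a test function `ζ`. On `[a, b]` away from the shock one takes `ζ = z`; between the exact
and the approximate shock `ζ` is the constant `z α`. -/
noncomputable def greenDefect (f S : E → E) (p : E → ℝ) (z ζ v w : ℝ → E) (a b : ℝ) : ℝ :=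
  (∫ x in a..b, p (v x)) - (∫ x in a..b, p (w x)) - (∫ x in a..b, ⟪z x, balanceResidual f S v x⟫)
    + (⟪ζ b, f (v b) - f (w b)⟫ - ⟪ζ a, f (v a) - f (w a)⟫)

/-- The density whose integral over `[a, b]` is `greenDefect`, when `ζ'` is the derivative of `ζ`
and `w` solves the balance law. -/
noncomputable def greenDensity (f S : E → E) (p : E → ℝ) (z ζ ζ' v w : ℝ → E) (x : ℝ) : ℝ :=
  p (v x) - p (w x) - ⟪ζ x, S (v x) - S (w x)⟫ + ⟪ζ' x, f (v x) - f (w x)⟫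
    + ⟪ζ x - z x, balanceResidual f S v x⟫

end ResidualDefs

lemma abs_integral_add_sub_le {a b M : ℝ} (hab : a ≤ b) {φ Φ Φ' : ℝ → ℝ}
    (hφ : IntervalIntegrable φ MeasureTheory.volume a b) (hΦ : ContinuousOn Φ (Icc a b))
    (hΦ' : ∀ x ∈ Ioo a b, HasDerivAt Φ (Φ' x) x) (hM : ∀ x ∈ Ioo a b, |φ x + Φ' x| ≤ M) :
    |(∫ x in a..b, φ x) + (Φ b - Φ a)| ≤ M * (b - a) := by
  have hconst (c : ℝ) : IntervalIntegrable (fun _ => c) MeasureTheory.volume a b :=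
    intervalIntegrable_const
  have hderiv : ∀ x ∈ Ioo a b, HasDerivWithinAt Φ (Φ' x) (Ioi x) x :=
    fun x hx => (hΦ' x hx).hasDerivWithinAt
  have hlower := integral_le_sub_of_hasDeriv_right_of_le hab hΦ hderiv
    ((intervalIntegrable_iff_integrableOn_Icc_of_le hab).1 ((hconst (-M)).sub hφ))
    fun x hx => by linarith [(abs_le.1 (hM x hx)).1]
  have hupper := sub_le_integral_of_hasDeriv_right_of_le hab hΦ hderiv
    ((intervalIntegrable_iff_integrableOn_Icc_of_le hab).1 ((hconst M).sub hφ))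
    fun x hx => by linarith [(abs_le.1 (hM x hx)).2]
  rw [integral_sub (hconst _) hφ, integral_const, smul_eq_mul] at hlower hupper
  exact abs_le.2 ⟨by linarith, by linarith⟩

lemma intervalIntegrable_comp {X : Type*} [TopologicalSpace X] {p : X → ℝ} {v : ℝ → X} {a b : ℝ}
    (hp : Continuous p) (hab : a ≤ b) (hv : ContinuousOn v (Icc a b)) :
    IntervalIntegrable (fun x => p (v x)) MeasureTheory.volume a b :=
  (hp.comp_continuousOn hv).intervalIntegrable_of_Icc hab

section Green

variable {ι E : Type*} [NormedAddCommGroup E] [InnerProductSpace ℝ E]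
  {f S : E → E} {p : E → ℝ} {z ζ ζ' v w : ℝ → E} {a b : ℝ}

lemma intervalIntegrable_inner_residual (hf : ContDiff ℝ 1 f) (hS : Continuous S) (hab : a ≤ b)
    (hv : ContDiffOn ℝ 1 v (Icc a b)) (hz : ContinuousOn z (Icc a b)) :
    IntervalIntegrable (fun x => ⟪z x, balanceResidual f S v x⟫) MeasureTheory.volume a b := by
  obtain rfl | hlt := hab.eq_or_lt
  · exact .refl
  have hcont : ContinuousOn (fun x => ⟪z x, derivWithin (f ∘ v) (Icc a b) x + S (v x)⟫) (Icc a b) :=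
    hz.inner (((hf.comp_contDiffOn hv).continuousOn_derivWithin (uniqueDiffOn_Icc hlt) le_rfl).add
      (hS.comp_continuousOn hv.continuousOn))
  refine (hcont.intervalIntegrable_of_Icc hab).congr_uIoo fun x hx => ?_
  rw [uIoo_of_le hab] at hx
  simp only [balanceResidual, derivWithin_of_mem_nhds (Icc_mem_nhds hx.1 hx.2)]

lemma hasDerivAt_inner_flux_sub (hf : ContDiff ℝ 1 f) (hv : ContDiffOn ℝ 1 v (Icc a b))
    (hw : ContDiffOn ℝ 1 w (Icc a b)) {x : ℝ} (hx : x ∈ Ioo a b) {m : E}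
    (hζ : HasDerivAt ζ m x) (hbal : balanceResidual f S w x = 0) :
    HasDerivAt (fun x => ⟪ζ x, f (v x) - f (w x)⟫)
      (⟪ζ x, balanceResidual f S v x - (S (v x) - S (w x))⟫ + ⟪m, f (v x) - f (w x)⟫) x := by
  have hflux {u : ℝ → E} (hu : ContDiffOn ℝ 1 u (Icc a b)) :
      HasDerivAt (f ∘ u) (deriv (f ∘ u) x) x :=
    ((hf.comp_contDiffOn hu).differentiableOn one_ne_zero).hasDerivAt (Icc_mem_nhds hx.1 hx.2)
  have hsub : deriv (f ∘ v) x - deriv (f ∘ w) x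
      = balanceResidual f S v x - (S (v x) - S (w x)) := by
    rw [eq_neg_of_add_eq_zero_left hbal, balanceResidual]; abel
  exact hsub ▸ hζ.inner ℝ ((hflux hv).sub (hflux hw))

lemma abs_greenDefect_le (hf : ContDiff ℝ 1 f) (hS : Continuous S) (hp : Continuous p)
    (hab : a ≤ b) (hv : ContDiffOn ℝ 1 v (Icc a b)) (hw : ContDiffOn ℝ 1 w (Icc a b))
    (hbal : ∀ x ∈ Ioo a b, balanceResidual f S w x = 0) (hz : ContinuousOn z (Icc a b))
    (hζ : ContinuousOn ζ (Icc a b)) (hζ' : ∀ x ∈ Ioo a b, HasDerivAt ζ (ζ' x) x) {M : ℝ}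
    (hM : ∀ x ∈ Ioo a b, |greenDensity f S p z ζ ζ' v w x| ≤ M) :
    |greenDefect f S p z ζ v w a b| ≤ M * (b - a) := by
  have hpv := intervalIntegrable_comp hp hab hv.continuousOn
  have hpw := intervalIntegrable_comp hp hab hw.continuousOn
  have hres := intervalIntegrable_inner_residual hf hS hab hv hz
  have hflux : ContinuousOn (fun x => ⟪ζ x, f (v x) - f (w x)⟫) (Icc a b) :=
    hζ.inner ((hf.continuous.comp_continuousOn hv.continuousOn).sub
      (hf.continuous.comp_continuousOn hw.continuousOn))
  rw [greenDefect, ← integral_sub hpv hpw, ← integral_sub (hpv.sub hpw) hres]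
  refine abs_integral_add_sub_le hab ((hpv.sub hpw).sub hres) hflux
    (fun x hx => hasDerivAt_inner_flux_sub hf hv hw hx (hζ' x hx) (hbal x hx)) fun x hx => ?_
  convert hM x hx using 2
  simp only [greenDensity, inner_sub_left, inner_sub_right]
  ring

lemma greenDefect_isBigO (hf : ContDiff ℝ 1 f) (hS : Continuous S) (hp : Continuous p)
    (hw : ContDiffOn ℝ 1 w (Icc a b)) (hbal : ∀ x ∈ Ioo a b, balanceResidual f S w x = 0)
    (hz : ContinuousOn z (Icc a b)) (hζ : ContinuousOn ζ (Icc a b))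
    (hζ' : ∀ x ∈ Ioo a b, HasDerivAt ζ (ζ' x) x)
    {l : Filter ι} {v : ι → ℝ → E} {c d g : ι → ℝ} (hac : ∀ᶠ ν in l, a ≤ c ν)
    (hcd : ∀ᶠ ν in l, c ν ≤ d ν) (hdb : ∀ᶠ ν in l, d ν ≤ b)
    (hv : ∀ᶠ ν in l, ContDiffOn ℝ 1 (v ν) (Icc (c ν) (d ν)))
    (hg : (fun q : ι × ℝ => greenDensity f S p z ζ ζ' (v q.1) w q.2)
      =O[uniformOn l fun ν => Ioo (c ν) (d ν)] fun q => g q.1) :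
    (fun ν => greenDefect f S p z ζ (v ν) w (c ν) (d ν)) =O[l] fun ν => g ν * (d ν - c ν) := by
  obtain ⟨C, hC⟩ := isBigO_uniformOn_iff.1 hg
  refine IsBigO.of_bound C ?_
  filter_upwards [hac, hcd, hdb, hv, hC] with ν hac hcd hdb hv hC
  have hIcc : Icc (c ν) (d ν) ⊆ Icc a b := Icc_subset_Icc hac hdb
  have hIoo : Ioo (c ν) (d ν) ⊆ Ioo a b := Ioo_subset_Ioo hac hdb
  have hbound := abs_greenDefect_le hf hS hp hcd hv (hw.mono hIcc) (fun x hx => hbal x (hIoo hx))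
    (hz.mono hIcc) (hζ.mono hIcc) (fun x hx => hζ' x (hIoo hx)) hC
  rwa [norm_mul, Real.norm_of_nonneg (sub_nonneg.2 hcd), ← mul_assoc]

end Green

section Defects

variable {ι E : Type*} [NormedAddCommGroup E] [InnerProductSpace ℝ E]
  {f S : E → E} {p : E → ℝ} {z z' w : ℝ → E} {a b : ℝ} {L : NNReal}

lemma greenDensity_eq_taylorRemainder [CompleteSpace E] {v : ℝ → E} {x : ℝ}
    (hadj : -(ContinuousLinearMap.adjoint (fderiv ℝ f (w x))) (z' x)
      + (ContinuousLinearMap.adjoint (fderiv ℝ S (w x))) (z x) = gradient p (w x)) :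
    greenDensity f S p z z z' v w x = taylorRemainder p (w x) (v x)
      - ⟪z x, taylorRemainder S (w x) (v x)⟫ + ⟪z' x, taylorRemainder f (w x) (v x)⟫ := by
  have hlinear : -⟪z' x, fderiv ℝ f (w x) (v x - w x)⟫ + ⟪z x, fderiv ℝ S (w x) (v x - w x)⟫
      = fderiv ℝ p (w x) (v x - w x) := by
    rw [← inner_gradient_left, ← hadj, inner_add_left, inner_neg_left,
      ContinuousLinearMap.adjoint_inner_left, ContinuousLinearMap.adjoint_inner_left]
  simp only [greenDensity, taylorRemainder, sub_self, inner_zero_left, ← hlinear,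
    inner_sub_right (𝕜 := ℝ) (z x), inner_sub_right (𝕜 := ℝ) (z' x)]
  ring

variable {v : ι → ℝ → E}

lemma greenDensity_self_isBigO [CompleteSpace E] (hf : ContDiff ℝ 2 f) (hS : ContDiff ℝ 2 S)
    (hp : ContDiff ℝ 2 p) (hw : ContinuousOn w (Icc a b)) (hz : LipschitzOnWith L z (Icc a b))
    (hz' : ∀ x ∈ Ioo a b, HasDerivAt z (z' x) x)
    (hadj : ∀ x ∈ Ioo a b, -(ContinuousLinearMap.adjoint (fderiv ℝ f (w x))) (z' x)
      + (ContinuousLinearMap.adjoint (fderiv ℝ S (w x))) (z x) = gradient p (w x))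
    {l : Filter (ι × ℝ)} {ε : ι × ℝ → ℝ} (hmem : ∀ᶠ q in l, q.2 ∈ Ioo a b)
    (hvw : (fun q : ι × ℝ => v q.1 q.2 - w q.2) =O[l] ε) (hε : Tendsto ε l (𝓝 0)) :
    (fun q : ι × ℝ => greenDensity f S p z z z' (v q.1) w q.2) =O[l] fun q => ε q ^ 2 := by
  have hK : IsCompact (w '' Icc a b) := isCompact_Icc.image_of_continuousOn hw
  have hwK : ∀ᶠ q in l, w q.2 ∈ w '' Icc a b :=
    hmem.mono fun q hq => mem_image_of_mem w (Ioo_subset_Icc_self hq)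
  obtain ⟨Z, hZ⟩ := isCompact_Icc.exists_bound_of_continuousOn hz.continuousOn
  have hz_bounded : (fun q => z q.2) =O[l] (1 : ι × ℝ → ℝ) :=
    IsBigO.of_bound Z <| hmem.mono fun q hq => by simpa using hZ q.2 (Ioo_subset_Icc_self hq)
  have hz'_bounded : (fun q => z' q.2) =O[l] (1 : ι × ℝ → ℝ) :=
    IsBigO.of_bound L <| hmem.mono fun q hq => by
      simpa using (hz' q.2 hq).hasFDerivAt.le_of_lipschitzOn (Icc_mem_nhds hq.1 hq.2) hz
  have hS_term := isBigO_inner_mul hz_bounded (taylorRemainder_isBigO_of_isCompact hS hK hwK hvw hε)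
  have hf_term := isBigO_inner_mul hz'_bounded
    (taylorRemainder_isBigO_of_isCompact hf hK hwK hvw hε)
  simp only [Pi.one_apply, one_mul] at hS_term hf_term
  exact (((taylorRemainder_isBigO_of_isCompact hp hK hwK hvw hε).sub hS_term).add hf_term).congr'
    (hmem.mono fun q hq => (greenDensity_eq_taylorRemainder (hadj q.2 hq)).symm) .rfl

lemma greenDensity_const_isBigO (hS : Differentiable ℝ S) (hp : Differentiable ℝ p) {y : E}
    {l : Filter (ι × ℝ)} {ε : ι × ℝ → ℝ}
    (hibc : ⟪z a, S (w a) - S y⟫ = p (w a) - p y)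
    (hvy : (fun q : ι × ℝ => v q.1 q.2 - y) =O[l] ε) (hwa : (fun q : ι × ℝ => w q.2 - w a) =O[l] ε)
    (hza : (fun q : ι × ℝ => z q.2 - z a) =O[l] ε) (hε : Tendsto ε l (𝓝 0))
    (hres : (fun q : ι × ℝ => balanceResidual f S (v q.1) q.2) =O[l] (1 : ι × ℝ → ℝ)) :
    (fun q : ι × ℝ => greenDensity f S p z (fun _ => z a) 0 (v q.1) w q.2) =O[l] ε := by
  have hshifted : Differentiable ℝ fun u => p u - ⟪z a, S u⟫ :=
    hp.sub ((differentiable_const _).inner ℝ hS)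
  have hsource : (fun q : ι × ℝ => ⟪z a - z q.2, balanceResidual f S (v q.1) q.2⟫) =O[l] ε := by
    simpa using isBigO_inner_mul (hza.neg_left.congr_left fun q => neg_sub _ _) hres
  refine (((isBigO_sub_of_differentiableAt (hshifted y) hvy hε).sub
    (isBigO_sub_of_differentiableAt (hshifted (w a)) hwa hε)).add hsource).congr_left fun q => ?_
  simp only [greenDensity, Pi.zero_apply, inner_zero_left, inner_sub_right] at hibc ⊢
  linarith

variable {l : Filter ι} {c d ε : ι → ℝ}

lemma greenDefect_self_isBigO [CompleteSpace E] (hf : ContDiff ℝ 2 f) (hS : ContDiff ℝ 2 S)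
    (hp : ContDiff ℝ 2 p) (hw : ContDiffOn ℝ 1 w (Icc a b))
    (hbal : ∀ x ∈ Ioo a b, balanceResidual f S w x = 0) (hz : LipschitzOnWith L z (Icc a b))
    (hz' : ∀ x ∈ Ioo a b, HasDerivAt z (z' x) x)
    (hadj : ∀ x ∈ Ioo a b, -(ContinuousLinearMap.adjoint (fderiv ℝ f (w x))) (z' x)
      + (ContinuousLinearMap.adjoint (fderiv ℝ S (w x))) (z x) = gradient p (w x))
    (hac : ∀ᶠ ν in l, a ≤ c ν) (hcd : ∀ᶠ ν in l, c ν ≤ d ν) (hdb : ∀ᶠ ν in l, d ν ≤ b)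
    (hv : ∀ᶠ ν in l, ContDiffOn ℝ 1 (v ν) (Icc (c ν) (d ν)))
    (hvw : (fun q : ι × ℝ => v q.1 q.2 - w q.2)
      =O[uniformOn l fun ν => Ioo (c ν) (d ν)] fun q => ε q.1)
    (hε : Tendsto ε l (𝓝 0)) :
    (fun ν => greenDefect f S p z z (v ν) w (c ν) (d ν)) =O[l] fun ν => ε ν ^ 2 := by
  have hmem : ∀ᶠ q : ι × ℝ in uniformOn l fun ν => Ioo (c ν) (d ν), q.2 ∈ Ioo a b := by
    refine eventually_uniformOn.2 ?_
    filter_upwards [hac, hdb] with ν hac hdb using Ioo_subset_Ioo hac hdb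
  have hdensity := greenDensity_self_isBigO hf hS hp hw.continuousOn hz hz' hadj hmem hvw
    (hε.comp tendsto_fst_uniformOn)
  have hlength : (fun ν => d ν - c ν) =O[l] (1 : ι → ℝ) := by
    refine IsBigO.of_bound (b - a) ?_
    filter_upwards [hac, hcd, hdb] with ν hac hcd hdb
    rw [Real.norm_of_nonneg (sub_nonneg.2 hcd), Pi.one_apply, norm_one, mul_one]
    linarith
  simpa using (greenDefect_isBigO (hf.of_le one_le_two) hS.continuous hp.continuous hw hbal
    hz.continuousOn hz.continuousOn hz' hac hcd hdb hv hdensity).trans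
      ((isBigO_refl (fun ν => ε ν ^ 2) l).mul hlength)

lemma greenDefect_const_isBigO (hf : ContDiff ℝ 1 f) (hS : Differentiable ℝ S)
    (hp : Differentiable ℝ p) (hab : a ≤ b) (hw : ContDiffOn ℝ 1 w (Icc a b))
    (hbal : ∀ x ∈ Ioo a b, balanceResidual f S w x = 0)
    (hz : LipschitzOnWith L z (Icc a b)) {y : E} (hibc : ⟪z a, S (w a) - S y⟫ = p (w a) - p y)
    (hd : ∀ᶠ ν in l, d ν ∈ Icc a b) (hv : ∀ᶠ ν in l, ContDiffOn ℝ 1 (v ν) (Icc a (d ν)))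
    (hda : (fun ν => d ν - a) =O[l] ε)
    (hvy : (fun q : ι × ℝ => v q.1 q.2 - y)
      =O[uniformOn l fun ν => Ioo a (d ν)] fun q => ε q.1)
    (hε : Tendsto ε l (𝓝 0))
    (hres : (fun q : ι × ℝ => balanceResidual f S (v q.1) q.2)
      =O[uniformOn l fun ν => Ioo a (d ν)] (1 : ι × ℝ → ℝ)) :
    (fun ν => greenDefect f S p z (fun _ => z a) (v ν) w a (d ν)) =O[l] fun ν => ε ν ^ 2 := by
  obtain ⟨M, hM⟩ := hw.exists_lipschitzOnWith one_ne_zero (convex_Icc a b) isCompact_Icc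
  have hmem : ∀ᶠ q : ι × ℝ in uniformOn l fun ν => Ioo a (d ν), q.2 ∈ Icc a b :=
    eventually_uniformOn.2 (hd.mono fun ν hν x hx => ⟨hx.1.le, hx.2.le.trans hν.2⟩)
  have hx := snd_sub_isBigO_uniformOn_Ioo hda
  have ha := left_mem_Icc.2 hab
  have hdensity := greenDensity_const_isBigO hS hp hibc hvy
    (isBigO_sub_of_lipschitzOnWith hM ha hmem hx) (isBigO_sub_of_lipschitzOnWith hz ha hmem hx)
    (hε.comp tendsto_fst_uniformOn) hres
  have hdefect := greenDefect_isBigO hf hS.continuous hp.continuous hw hbal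
    hz.continuousOn continuousOn_const (fun x _ => hasDerivAt_const x (z a))
    (.of_forall fun _ => le_rfl) (hd.mono fun _ h => h.1) (hd.mono fun _ h => h.2) hv hdensity
  simpa only [pow_two] using hdefect.trans ((isBigO_refl ε l).mul hda)

end Defects

section ErrorRepresentation

variable {E : Type*} [NormedAddCommGroup E] [InnerProductSpace ℝ E]

lemma error_eq_greenDefect_sum {f S : E → E} {p : E → ℝ} {z vL vR wL wR : ℝ → E} {a α β b : ℝ}
    (hf : ContDiff ℝ 1 f) (hS : Continuous S) (hp : Continuous p) (hα : α ∈ Icc a b)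
    (hβ : β ∈ Icc α b) (hz : ContinuousOn z (Icc a b)) (hwR : ContinuousOn wR (Icc a b))
    (hvL : ContDiffOn ℝ 1 vL (Icc a β)) (hRH : f (wR α) = f (wL α)) (ha : vL a = wL a)
    (hb : vR b = wR b) :
    (((∫ x in a..β, p (vL x)) + (∫ x in β..b, p (vR x)) - ⟪z α, f (vR β) - f (vL β)⟫)
        - ((∫ x in a..α, p (wL x)) + (∫ x in α..b, p (wR x))))
      - ((∫ x in a..β, ⟪z x, balanceResidual f S vL x⟫)
        + (∫ x in β..b, ⟪z x, balanceResidual f S vR x⟫))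
    = greenDefect f S p z z vL wL a α + greenDefect f S p z (fun _ => z α) vL wR α β
      + greenDefect f S p z z vR wR β b + ⟪z β - z α, f (vR β) - f (wR β)⟫ := by
  have haα : Icc a α ⊆ Icc a β := Icc_subset_Icc_right hβ.1
  have hαβ : Icc α β ⊆ Icc a β := Icc_subset_Icc_left hα.1
  have haβ : Icc a β ⊆ Icc a b := Icc_subset_Icc_right hβ.2
  have hβb : Icc β b ⊆ Icc a b := Icc_subset_Icc_left (hα.1.trans hβ.1)
  rw [← integral_add_adjacent_intervals
      (intervalIntegrable_comp hp hα.1 (hvL.continuousOn.mono haα))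
      (intervalIntegrable_comp hp hβ.1 (hvL.continuousOn.mono hαβ)),
    ← integral_add_adjacent_intervals
      (intervalIntegrable_comp hp hβ.1 (hwR.mono (hαβ.trans haβ)))
      (intervalIntegrable_comp hp hβ.2 (hwR.mono hβb)),
    ← integral_add_adjacent_intervals
      (intervalIntegrable_inner_residual hf hS hα.1 (hvL.mono haα) (hz.mono (haα.trans haβ)))
      (intervalIntegrable_inner_residual hf hS hβ.1 (hvL.mono hαβ) (hz.mono (hαβ.trans haβ)))]
  simp only [greenDefect, ha, hb, hRH, sub_self, inner_zero_right, inner_sub_left, inner_sub_right]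
  ring

lemma inner_source_sub_eq_of_flux_deriv {f S : E → E} {p : E → ℝ} {wL wR : ℝ → E} {α : ℝ} {m : E}
    (hL : balanceResidual f S wL α = 0) (hR : balanceResidual f S wR α = 0)
    (hibc : ⟪m, deriv (f ∘ wR) α - deriv (f ∘ wL) α⟫ = -(p (wR α) - p (wL α))) :
    ⟪m, S (wR α) - S (wL α)⟫ = p (wR α) - p (wL α) := by
  rw [eq_neg_of_add_eq_zero_left hL, eq_neg_of_add_eq_zero_left hR, ← neg_sub', inner_neg_right]
    at hibc
  exact neg_injective hibc

lemma sub_const_isBigO_uniformOn_Ioo {ι : Type*} {l : Filter ι} {ε β : ι → ℝ} {w : ℝ → E}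
    {v : ι → ℝ → E} {a b α : ℝ} (hα : α ∈ Icc a b) (hw : ContDiffOn ℝ 1 w (Icc a b))
    (hβ : ∀ᶠ ν in l, β ν ≤ b) (hβα : (fun ν => β ν - α) =O[l] ε)
    (hvw : (fun q : ι × ℝ => v q.1 q.2 - w q.2)
      =O[uniformOn l fun ν => Icc a (β ν)] fun q => ε q.1) :
    (fun q : ι × ℝ => v q.1 q.2 - w α) =O[uniformOn l fun ν => Ioo α (β ν)] fun q => ε q.1 := by
  obtain ⟨M, hM⟩ := hw.exists_lipschitzOnWith one_ne_zero (convex_Icc a b) isCompact_Icc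
  have hmem : ∀ᶠ q : ι × ℝ in uniformOn l fun ν => Ioo α (β ν), q.2 ∈ Icc a b :=
    eventually_uniformOn.2 (hβ.mono fun ν hν x hx => ⟨hα.1.trans hx.1.le, hx.2.le.trans hν⟩)
  have hIoo : ∀ ν, Ioo α (β ν) ⊆ Icc a (β ν) := fun ν x hx => ⟨hα.1.trans hx.1.le, hx.2.le⟩
  have hclose := hvw.mono (uniformOn_mono (.of_forall hIoo))
  have hlip := isBigO_sub_of_lipschitzOnWith hM hα hmem (snd_sub_isBigO_uniformOn_Ioo hβα)
  exact (hclose.add hlip).congr_left fun q => sub_add_sub_cancel _ _ _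

lemma inner_shift_isBigO {ι : Type*} {l : Filter ι} {ε β : ι → ℝ} (hε : Tendsto ε l (𝓝 0))
    {f : E → E} (hf : Differentiable ℝ f) {z w : ℝ → E} {v : ι → ℝ → E} {a b α : ℝ} {L : NNReal}
    (hz : LipschitzOnWith L z (Icc a b)) (hw : ContDiffOn ℝ 1 w (Icc a b)) (hα : α ∈ Icc a b)
    (hβ : ∀ᶠ ν in l, β ν ∈ Icc a b) (hβα : (fun ν => β ν - α) =O[l] ε)
    (hvw : (fun ν => v ν (β ν) - w (β ν)) =O[l] ε) :
    (fun ν => ⟪z (β ν) - z α, f (v ν (β ν)) - f (w (β ν))⟫) =O[l] fun ν => ε ν ^ 2 := by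
  obtain ⟨M, hM⟩ := hw.exists_lipschitzOnWith one_ne_zero (convex_Icc a b) isCompact_Icc
  have hwα := isBigO_sub_of_lipschitzOnWith hM hα hβ hβα
  have hvα : (fun ν => v ν (β ν) - w α) =O[l] ε :=
    (hvw.add hwα).congr_left fun ν => sub_add_sub_cancel _ _ _
  have hflux : (fun ν => f (v ν (β ν)) - f (w (β ν))) =O[l] ε :=
    ((isBigO_sub_of_differentiableAt (hf (w α)) hvα hε).sub
      (isBigO_sub_of_differentiableAt (hf (w α)) hwα hε)).congr_left
        fun ν => sub_sub_sub_cancel_right _ _ _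
  simpa only [pow_two] using
    isBigO_inner_mul (isBigO_sub_of_lipschitzOnWith hz hα hβ hβα) hflux

theorem usual_adjoint_error_representation_general [CompleteSpace E]
    {ι : Type*} {l : Filter ι} {ε : ι → ℝ} (hε : Tendsto ε l (𝓝 0))
    {a b α : ℝ} (hα : α ∈ Ioo a b) {f S : E → E} {p : E → ℝ}
    (hf : ContDiff ℝ 2 f) (hS : ContDiff ℝ 2 S) (hp : ContDiff ℝ 2 p) {wL wR : ℝ → E}
    (hwL : ContDiffOn ℝ 1 wL (Icc a b)) (hwR : ContDiffOn ℝ 1 wR (Icc a b))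
    (hbalL : ∀ x ∈ Ioc a α, balanceResidual f S wL x = 0)
    (hbalR : ∀ x ∈ Ico α b, balanceResidual f S wR x = 0)
    (hRH : f (wR α) = f (wL α)) {z z' : ℝ → E} {L : NNReal}
    (hz : LipschitzOnWith L z (Icc a b))
    (hz'L : ∀ x ∈ Ioo a α, HasDerivAt z (z' x) x) (hz'R : ∀ x ∈ Ioo α b, HasDerivAt z (z' x) x)
    (hadjL : ∀ x ∈ Ioo a α, -(ContinuousLinearMap.adjoint (fderiv ℝ f (wL x))) (z' x)
      + (ContinuousLinearMap.adjoint (fderiv ℝ S (wL x))) (z x) = gradient p (wL x))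
    (hadjR : ∀ x ∈ Ioo α b, -(ContinuousLinearMap.adjoint (fderiv ℝ f (wR x))) (z' x)
      + (ContinuousLinearMap.adjoint (fderiv ℝ S (wR x))) (z x) = gradient p (wR x))
    {β : ι → ℝ} {vL vR : ι → ℝ → E} (hβ : ∀ᶠ ν in l, β ν ∈ Icc α b)
    (hvL : ∀ᶠ ν in l, ContDiffOn ℝ 1 (vL ν) (Icc a (β ν)))
    (hvR : ∀ᶠ ν in l, ContDiffOn ℝ 1 (vR ν) (Icc (β ν) b))
    (hβα : (fun ν => β ν - α) =O[l] ε)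
    (hvwL : (fun q : ι × ℝ => vL q.1 q.2 - wL q.2)
      =O[uniformOn l fun ν => Icc a (β ν)] fun q => ε q.1)
    (hvwR : (fun q : ι × ℝ => vR q.1 q.2 - wR q.2)
      =O[uniformOn l fun ν => Icc (β ν) b] fun q => ε q.1)
    (hres : (fun q : ι × ℝ => balanceResidual f S (vL q.1) q.2)
      =O[uniformOn l fun ν => Ioo α (β ν)] (1 : ι × ℝ → ℝ))
    (ha : ∀ᶠ ν in l, vL ν a = wL a) (hb : ∀ᶠ ν in l, vR ν b = wR b)
    (hibc : ⟪z α, deriv (f ∘ wR) α - deriv (f ∘ wL) α⟫ = -(p (wR α) - p (wL α))) :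
    (fun ν =>
      (((∫ x in a..(β ν), p (vL ν x)) + (∫ x in (β ν)..b, p (vR ν x))
          - ⟪z α, f (vR ν (β ν)) - f (vL ν (β ν))⟫)
        - ((∫ x in a..α, p (wL x)) + (∫ x in α..b, p (wR x))))
      - ((∫ x in a..(β ν), ⟪z x, balanceResidual f S (vL ν) x⟫)
        + (∫ x in (β ν)..b, ⟪z x, balanceResidual f S (vR ν) x⟫)))
      =O[l] fun ν => ε ν ^ 2 := by
  have haα : Icc a α ⊆ Icc a b := Icc_subset_Icc_right hα.2.le
  have hαb : Icc α b ⊆ Icc a b := Icc_subset_Icc_left hα.1.le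
  have hleft : (fun ν => greenDefect f S p z z (vL ν) wL a α) =O[l] fun ν => ε ν ^ 2 :=
    greenDefect_self_isBigO hf hS hp (hwL.mono haα) (fun x hx => hbalL x (Ioo_subset_Ioc_self hx))
      (hz.mono haα) hz'L hadjL (.of_forall fun _ => le_rfl) (.of_forall fun _ => hα.1.le)
      (.of_forall fun _ => le_rfl)
      (by filter_upwards [hβ, hvL] with ν hβ hvL using hvL.mono (Icc_subset_Icc_right hβ.1))
      (hvwL.mono (uniformOn_mono (hβ.mono fun ν hβ =>
        Ioo_subset_Icc_self.trans (Icc_subset_Icc_right hβ.1)))) hε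
  have hmiddle : (fun ν => greenDefect f S p z (fun _ => z α) (vL ν) wR α (β ν))
      =O[l] fun ν => ε ν ^ 2 :=
    greenDefect_const_isBigO (hf.of_le one_le_two) (hS.differentiable two_ne_zero)
      (hp.differentiable two_ne_zero)
      hα.2.le (hwR.mono hαb) (fun x hx => hbalR x (Ioo_subset_Ico_self hx)) (hz.mono hαb)
      (inner_source_sub_eq_of_flux_deriv (hbalL α ⟨hα.1, le_rfl⟩) (hbalR α ⟨le_rfl, hα.2⟩) hibc)
      hβ (hvL.mono fun ν h => h.mono (Icc_subset_Icc_left hα.1.le)) hβα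
      (sub_const_isBigO_uniformOn_Ioo (Ioo_subset_Icc_self hα) hwL (hβ.mono fun _ h => h.2) hβα
        hvwL) hε hres
  have hright : (fun ν => greenDefect f S p z z (vR ν) wR (β ν) b) =O[l] fun ν => ε ν ^ 2 :=
    greenDefect_self_isBigO hf hS hp (hwR.mono hαb) (fun x hx => hbalR x (Ioo_subset_Ico_self hx))
      (hz.mono hαb) hz'R hadjR (hβ.mono fun _ h => h.1) (hβ.mono fun _ h => h.2)
      (.of_forall fun _ => le_rfl) hvR
      (hvwR.mono (uniformOn_mono (.of_forall fun ν => Ioo_subset_Icc_self))) hε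
  have hshift : (fun ν => ⟪z (β ν) - z α, f (vR ν (β ν)) - f (wR (β ν))⟫) =O[l] fun ν => ε ν ^ 2 :=
    inner_shift_isBigO hε (hf.differentiable two_ne_zero) hz hwR (Ioo_subset_Icc_self hα)
      (hβ.mono fun ν h => hαb h) hβα
      (hvwR.comp_tendsto (tendsto_mk_uniformOn (hβ.mono fun ν h => left_mem_Icc.2 h.2)))
  refine (((hleft.add hmiddle).add hright).add hshift).congr' ?_ .rfl
  filter_upwards [hβ, hvL, ha, hb] with ν hβ hvL ha hb
  exact (error_eq_greenDefect_sum (hf.of_le one_le_two) hS.continuous hp.continuous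
    (Ioo_subset_Icc_self hα) hβ hz.continuousOn hwR.continuousOn hvL hRH ha hb).symm

end ErrorRepresentation

/-- Adjoint error representation with internal shock term (Theorem 1): for a
piecewise smooth exact solution `w` of the balance law with jump at `α`, a
Lipschitz adjoint solution `z`, and approximations `v_ν` with shock at `β_ν`
sufficiently close to `w` to order `ν` matching `w` at the boundary, the
modified functional `J(u) = ∫ p(u) - ⟪z(α), [f(u)]⟫` satisfies the usual adjoint
error representation `J(v_ν) - J(w) = ∫ ⟪z, residual⟫ + o(ν)`, provided `z`
additionally fulfills the interior boundary condition
`⟪z(α), [f(w)_x]⟫ = -[p(w)]`. -/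
theorem usual_adjoint_error_representation
    (d : ℕ) (hd : 1 ≤ d) (α : ℝ) (hα : α ∈ Ioo (0:ℝ) 1)
    (f S : EuclideanSpace ℝ (Fin d) → EuclideanSpace ℝ (Fin d))
    (p : EuclideanSpace ℝ (Fin d) → ℝ)
    (hf : ContDiff ℝ 2 f) (hS : ContDiff ℝ 2 S) (hp : ContDiff ℝ 2 p)
    (wL wR : ℝ → EuclideanSpace ℝ (Fin d))
    (hwL : ContDiffOn ℝ 1 wL (Icc 0 1)) (hwR : ContDiffOn ℝ 1 wR (Icc 0 1))
    -- w solves the balance law piecewise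
    (hbalL : ∀ x ∈ Icc (0:ℝ) α, deriv (f ∘ wL) x + S (wL x) = 0)
    (hbalR : ∀ x ∈ Icc α (1:ℝ), deriv (f ∘ wR) x + S (wR x) = 0)
    -- Rankine–Hugoniot condition at α
    (hRH : f (wR α) = f (wL α))
    -- z is a Lipschitz adjoint solution, differentiable away from α
    (z z' : ℝ → EuclideanSpace ℝ (Fin d)) (L : NNReal)
    (hzLip : LipschitzOnWith L z (Icc 0 1))
    (hz'L : ∀ x ∈ Ico (0:ℝ) α, HasDerivAt z (z' x) x)
    (hz'R : ∀ x ∈ Ioc α (1:ℝ), HasDerivAt z (z' x) x)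
    (hadjL : ∀ x ∈ Ico (0:ℝ) α,
      -(ContinuousLinearMap.adjoint (fderiv ℝ f (wL x))) (z' x)
        + (ContinuousLinearMap.adjoint (fderiv ℝ S (wL x))) (z x)
        = gradient p (wL x))
    (hadjR : ∀ x ∈ Ioc α (1:ℝ),
      -(ContinuousLinearMap.adjoint (fderiv ℝ f (wR x))) (z' x)
        + (ContinuousLinearMap.adjoint (fderiv ℝ S (wR x))) (z x)
        = gradient p (wR x))
    -- the family of approximations
    (β : ℝ → ℝ) (vL vR : ℝ → ℝ → EuclideanSpace ℝ (Fin d)) (μ : ℝ → ℝ)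
    (hβ : ∀ ν > (0:ℝ), β ν ∈ Ioo α 1)
    (hvL : ∀ ν > (0:ℝ), ContDiffOn ℝ 1 (vL ν) (Icc 0 1))
    (hvR : ∀ ν > (0:ℝ), ContDiffOn ℝ 1 (vR ν) (Icc 0 1))
    -- (i) β_ν - α = O(ν)
    (hi : ∃ C : ℝ, ∀ᶠ ν in 𝓝[>] (0:ℝ), β ν - α ≤ C * ν)
    -- (ii) uniform closeness of order ν
    (hiiL : ∃ C : ℝ, ∀ᶠ ν in 𝓝[>] (0:ℝ), ∀ x ∈ Icc (0:ℝ) (β ν),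
      ‖vL ν x - wL x‖ ≤ C * ν)
    (hiiR : ∃ C : ℝ, ∀ᶠ ν in 𝓝[>] (0:ℝ), ∀ x ∈ Icc (β ν) 1 ∪ {α},
      ‖vR ν x - wR x‖ ≤ C * ν)
    -- (iii) residuals of size μ_ν with μ_ν → 0
    (hresL : ∀ ν > (0:ℝ), ∀ x ∈ Icc (0:ℝ) (β ν),
      ‖deriv (f ∘ vL ν) x + S (vL ν x)‖ ≤ μ ν)
    (hresR : ∀ ν > (0:ℝ), ∀ x ∈ Icc (β ν) (1:ℝ),
      ‖deriv (f ∘ vR ν) x + S (vR ν x)‖ ≤ μ ν)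
    (hμ : Tendsto μ (𝓝[>] (0:ℝ)) (𝓝 0))
    -- (iv) v matches w at the domain boundary
    (hbdry : ∀ ν > (0:ℝ), vL ν 0 = wL 0 ∧ vR ν 1 = wR 1)
    -- (v) all values in a fixed compact set
    (K : Set (EuclideanSpace ℝ (Fin d))) (hK : IsCompact K)
    (hwK : ∀ x ∈ Icc (0:ℝ) 1, wL x ∈ K ∧ wR x ∈ K)
    (hvK : ∀ ν > (0:ℝ), ∀ x ∈ Icc (0:ℝ) 1, vL ν x ∈ K ∧ vR ν x ∈ K)
    -- z fulfills the interior boundary condition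
    (hibc : ⟪z α, deriv (f ∘ wR) α - deriv (f ∘ wL) α⟫
      = -(p (wR α) - p (wL α))) :
    (fun ν =>
      -- J(v_ν) - J(w)
      (((∫ x in (0:ℝ)..(β ν), p (vL ν x)) + (∫ x in (β ν)..(1:ℝ), p (vR ν x))
          - ⟪z α, f (vR ν (β ν)) - f (vL ν (β ν))⟫)
        - ((∫ x in (0:ℝ)..α, p (wL x)) + (∫ x in α..(1:ℝ), p (wR x))))
      -- minus the adjoint-weighted residual
      - ((∫ x in (0:ℝ)..(β ν), ⟪z x, deriv (f ∘ vL ν) x + S (vL ν x)⟫)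
        + (∫ x in (β ν)..(1:ℝ), ⟪z x, deriv (f ∘ vR ν) x + S (vR ν x)⟫)))
      =o[𝓝[>] (0:ℝ)] (fun ν => ν) := by
  have hβ' : ∀ᶠ ν in 𝓝[>] (0 : ℝ), β ν ∈ Icc α 1 :=
    eventually_nhdsWithin_of_forall fun ν hν => Ioo_subset_Icc_self (hβ ν hν)
  have hβα : (fun ν => β ν - α) =O[𝓝[>] 0] fun ν => ν :=
    isBigO_of_norm_le_mul <| hi.imp fun C hC => by
      filter_upwards [hC, hβ'] with ν hC hβν
      rwa [Real.norm_of_nonneg (sub_nonneg.2 hβν.1)]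
  have hres : (fun q : ℝ × ℝ => balanceResidual f S (vL q.1) q.2)
      =O[uniformOn (𝓝[>] 0) fun ν => Ioo α (β ν)] (1 : ℝ × ℝ → ℝ) := by
    refine IsBigO.of_bound 1 (eventually_uniformOn.2 ?_)
    filter_upwards [self_mem_nhdsWithin, hμ.eventually_le_const one_pos] with ν hν hμν x hx
    simpa [balanceResidual] using (hresL ν hν x ⟨hα.1.le.trans hx.1.le, hx.2.le⟩).trans hμν
  have hquadratic := usual_adjoint_error_representation_general
    (tendsto_id.mono_left nhdsWithin_le_nhds) hα hf hS hp hwL hwR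
    (fun x hx => hbalL x (Ioc_subset_Icc_self hx)) (fun x hx => hbalR x (Ico_subset_Icc_self hx))
    hRH hzLip
    (fun x hx => hz'L x (Ioo_subset_Ico_self hx)) (fun x hx => hz'R x (Ioo_subset_Ioc_self hx))
    (fun x hx => hadjL x (Ioo_subset_Ico_self hx)) (fun x hx => hadjR x (Ioo_subset_Ioc_self hx))
    hβ' (eventually_nhdsWithin_of_forall fun ν hν =>
      (hvL ν hν).mono (Icc_subset_Icc_right (hβ ν hν).2.le))
    (eventually_nhdsWithin_of_forall fun ν hν =>
      (hvR ν hν).mono (Icc_subset_Icc_left (hα.1.trans (hβ ν hν).1).le))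
    hβα (isBigO_uniformOn_of_norm_le_mul hiiL) ((isBigO_uniformOn_of_norm_le_mul hiiR).mono
      (uniformOn_mono (.of_forall fun _ => subset_union_left))) hres
    (eventually_nhdsWithin_of_forall fun ν hν => (hbdry ν hν).1)
    (eventually_nhdsWithin_of_forall fun ν hν => (hbdry ν hν).2) hibc
  exact hquadratic.trans_isLittleO ((isLittleO_pow_id one_lt_two).mono nhdsWithin_le_nhds)
end

section
/- Fix d ≥ 1 and write ℝ^d for EuclideanSpace ℝ (Fin d), with Euclidean inner product ⟪·,·⟫. Let ε > 0, let f, S : ℝ^d → ℝ^d be C¹, let p : ℝ^d → ℝ be C¹, let a < b be reals, and let w, z : ℝ → ℝ^d be C² on [a,b] satisfying for all x ∈ [a,b] the viscous primal equation (f∘w)'(x) + S(w(x)) = ε·w''(x) and the viscous adjoint equation −(Df(w(x)))*·z'(x) + (DS(w(x)))*·z(x) = ε·z''(x) + ∇p(w(x)), where * denotes the adjoint with respect to ⟪·,·⟫. Then ( p(w(b)) − ⟪z(b), S(w(b))⟫ ) − ( p(w(a)) − ⟪z(a), S(w(a))⟫ ) = −ε·( ⟪z'(b), w'(b)⟫ −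 ⟪z'(a), w'(a)⟫ ). -/
open Set
open scoped RealInnerProductSpace

/-! Test the primal equation against `z'` and the adjoint equation against `w'` and add. The flux
terms `⟪z', Df w'⟫` cancel by the definition of the adjoint, and what is left says that the
derivative of `p(w) - ⟪z, S(w)⟫ + ε ⟪z', w'⟫` vanishes. -/

section HilbertSpace

variable {E : Type*} [NormedAddCommGroup E] [InnerProductSpace ℝ E] [CompleteSpace E]

theorem hasDerivAt_comp_of_hasGradientAt {p : E → ℝ} {w : ℝ → E} {g v : E} {x : ℝ}
    (hp : HasGradientAt p g (w x)) (hw : HasDerivAt w v x) :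
    HasDerivAt (fun t => p (w t)) ⟪g, v⟫ x :=
  (hp.hasFDerivAt.comp_hasDerivAt x hw).congr_deriv InnerProductSpace.toDual_apply_apply

/-- The quantity `p(w) - ⟪z, S(w)⟫ + ε ⟪z', w'⟫` conserved by viscous primal and adjoint solutions
`w` and `z`. The derivatives `w'` and `z'` are passed as separate functions, so that the definition
does not involve the junk values of `deriv`. -/
def viscousFirstIntegral (ε : ℝ) (S : E → E) (p : E → ℝ) (w z w' z' : ℝ → E) (x : ℝ) : ℝ :=
  p (w x) - ⟪z x, S (w x)⟫ + ε * ⟪z' x, w' x⟫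

theorem hasDerivAt_viscousFirstIntegral (ε : ℝ) {S : E → E} {S' : E →L[ℝ] E} {p : E → ℝ} {g : E}
    {w z w' z' : ℝ → E} {w'' z'' : E} {x : ℝ}
    (hS : HasFDerivAt S S' (w x)) (hp : HasGradientAt p g (w x))
    (hw : HasDerivAt w (w' x) x) (hw' : HasDerivAt w' w'' x)
    (hz : HasDerivAt z (z' x) x) (hz' : HasDerivAt z' z'' x) :
    HasDerivAt (viscousFirstIntegral ε S p w z w' z')
      (⟪g, w' x⟫ - (⟪z x, S' (w' x)⟫ + ⟪z' x, S (w x)⟫) + ε * (⟪z' x, w''⟫ + ⟪z'', w' x⟫)) x :=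
  ((hasDerivAt_comp_of_hasGradientAt hp hw).sub (hz.inner ℝ (hS.comp_hasDerivAt x hw))).add
    ((hz'.inner ℝ hw').const_mul ε)

theorem viscous_primal_adjoint_inner_identity {ε : ℝ} {A B : E →L[ℝ] E} {s g w' w'' z z' z'' : E}
    (hprimal : A w' + s = ε • w'')
    (hadj : -(ContinuousLinearMap.adjoint A z') + ContinuousLinearMap.adjoint B z = ε • z'' + g) :
    ⟪g, w'⟫ - (⟪z, B w'⟫ + ⟪z', s⟫) + ε * (⟪z', w''⟫ + ⟪z'', w'⟫) = 0 := by
  have primal_tested : ⟪z', A w'⟫ + ⟪z', s⟫ = ε * ⟪z', w''⟫ := by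
    rw [← inner_add_right, hprimal, real_inner_smul_right]
  have adjoint_tested : -⟪z', A w'⟫ + ⟪z, B w'⟫ = ε * ⟪z'', w'⟫ + ⟪g, w'⟫ := by
    simpa only [inner_add_left, inner_neg_left, real_inner_smul_left,
      ContinuousLinearMap.adjoint_inner_left] using congrArg (⟪·, w'⟫) hadj
  linarith

theorem viscous_interior_bc_integrated_identity_general {ε : ℝ} {f S : E → E} {p : E → ℝ}
    {a b : ℝ} (hab : a ≤ b) {w z w' w'' z' z'' : ℝ → E}
    (hf : ∀ x ∈ Icc a b, DifferentiableAt ℝ f (w x))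
    (hS : ∀ x ∈ Icc a b, DifferentiableAt ℝ S (w x))
    (hp : ∀ x ∈ Icc a b, DifferentiableAt ℝ p (w x))
    (hw' : ∀ x ∈ Icc a b, HasDerivAt w (w' x) x)
    (hw'' : ∀ x ∈ Icc a b, HasDerivAt w' (w'' x) x)
    (hz' : ∀ x ∈ Icc a b, HasDerivAt z (z' x) x)
    (hz'' : ∀ x ∈ Icc a b, HasDerivAt z' (z'' x) x)
    (hprimal : ∀ x ∈ Icc a b, deriv (f ∘ w) x + S (w x) = ε • w'' x)
    (hadj : ∀ x ∈ Icc a b,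
      -(ContinuousLinearMap.adjoint (fderiv ℝ f (w x))) (z' x)
        + (ContinuousLinearMap.adjoint (fderiv ℝ S (w x))) (z x)
        = ε • z'' x + gradient p (w x)) :
    (p (w b) - ⟪z b, S (w b)⟫) - (p (w a) - ⟪z a, S (w a)⟫)
      = -ε * (⟪z' b, w' b⟫ - ⟪z' a, w' a⟫) := by
  have deriv_zero : ∀ x ∈ Icc a b,
      HasDerivAt (viscousFirstIntegral ε S p w z w' z') 0 x := by
    intro x hx
    have flux_deriv : deriv (f ∘ w) x = fderiv ℝ f (w x) (w' x) :=
      ((hf x hx).hasFDerivAt.comp_hasDerivAt x (hw' x hx)).deriv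
    exact (hasDerivAt_viscousFirstIntegral ε (hS x hx).hasFDerivAt (hp x hx).hasGradientAt
      (hw' x hx) (hw'' x hx) (hz' x hx) (hz'' x hx)).congr_deriv
        (viscous_primal_adjoint_inner_identity (flux_deriv ▸ hprimal x hx) (hadj x hx))
  have endpoints_eq :
      viscousFirstIntegral ε S p w z w' z' b = viscousFirstIntegral ε S p w z w' z' a :=
    constant_of_has_deriv_right_zero (HasDerivAt.continuousOn deriv_zero)
      (fun x hx => (deriv_zero x (Ico_subset_Icc_self hx)).hasDerivWithinAt) b
      (right_mem_Icc.2 hab)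
  unfold viscousFirstIntegral at endpoints_eq
  linarith

end HilbertSpace

/-- Exact identity from the proof of Theorem 2: across the transition region
`[a,b]`, `[p(w^ε)] - [⟪z^ε, S(w^ε)⟫] = -ε [⟪z^ε_x, w^ε_x⟫]_a^b` for viscous
primal and adjoint solutions. -/
theorem viscous_interior_bc_integrated_identity
    (d : ℕ) (hd : 1 ≤ d) (ε : ℝ) (hε : 0 < ε)
    (f S : EuclideanSpace ℝ (Fin d) → EuclideanSpace ℝ (Fin d))
    (hf : ContDiff ℝ 1 f) (hS : ContDiff ℝ 1 S)
    (p : EuclideanSpace ℝ (Fin d) → ℝ) (hp : ContDiff ℝ 1 p)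
    (a b : ℝ) (hab : a < b)
    (w z w' w'' z' z'' : ℝ → EuclideanSpace ℝ (Fin d))
    -- w and z are C² on [a,b]
    (hw' : ∀ x ∈ Icc a b, HasDerivAt w (w' x) x)
    (hw'' : ∀ x ∈ Icc a b, HasDerivAt w' (w'' x) x)
    (hz' : ∀ x ∈ Icc a b, HasDerivAt z (z' x) x)
    (hz'' : ∀ x ∈ Icc a b, HasDerivAt z' (z'' x) x)
    (hw''c : ContinuousOn w'' (Icc a b)) (hz''c : ContinuousOn z'' (Icc a b))
    -- viscous primal equation
    (hprimal : ∀ x ∈ Icc a b, deriv (f ∘ w) x + S (w x) = ε • w'' x)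
    -- viscous adjoint equation
    (hadj : ∀ x ∈ Icc a b,
      -(ContinuousLinearMap.adjoint (fderiv ℝ f (w x))) (z' x)
        + (ContinuousLinearMap.adjoint (fderiv ℝ S (w x))) (z x)
        = ε • z'' x + gradient p (w x)) :
    (p (w b) - ⟪z b, S (w b)⟫) - (p (w a) - ⟪z a, S (w a)⟫)
      = -ε * (⟪z' b, w' b⟫ - ⟪z' a, w' a⟫) := by
  exact viscous_interior_bc_integrated_identity_general hab.le
    (fun x _ => hf.differentiable one_ne_zero (w x))
    (fun x _ => hS.differentiable one_ne_zero (w x))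
    (fun x _ => hp.differentiable one_ne_zero (w x)) hw' hw'' hz' hz'' hprimal hadj
end
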